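/- If f : H_M → H_N is a contraction map, x, y ∈ H_M are Hamming distance preserving, and z ∈ H_M is k-off Hamming paths between x and y, then f(z) is at most k-off Hamming paths between f(x) and f(y); that is, min over e' in HP(f(x),f(y)) of d_β(f(z),e') is at most k. -/

import Mathlib

open Finset

/-- Weighted Hamming distance on the hypercube `{0,1}^M` (bits modeled as `Bool`):
`d_γ(x,y) = Σ_i γ_i |x_i - y_i|`. -/
def hamDist {M : ℕ} (γ : Fin M → ℤ) (x y : Fin M → Bool) : ℤ :=
  ∑ i, if x i = y i then 0 else γ i

/-- `z` is on a Hamming path between `x` and `y`: `z` agrees with `x` (and `y`)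
on every coordinate where `x` and `y` agree. -/
def onHamPath {M : ℕ} (x y z : Fin M → Bool) : Prop :=
  ∀ k, x k = y k → z k = x k

instance {M : ℕ} (x y : Fin M → Bool) : DecidablePred (onHamPath x y) :=
  fun z => inferInstanceAs (Decidable (∀ k, x k = y k → z k = x k))

/-- `HP(x,y)`: the (finite, nonempty) set of vertices on Hamming paths between `x` and `y`. -/
def hpSet {M : ℕ} (x y : Fin M → Bool) : Finset (Fin M → Bool) :=
  Finset.univ.filter (onHamPath x y)

lemma hpSet_nonempty {M : ℕ} (x y : Fin M → Bool) : (hpSet x y).Nonempty :=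
  ⟨x, by simp [hpSet, onHamPath]⟩

/-- `z` is `k`-off Hamming paths between `x` and `y` when
`k = min_{e ∈ HP(x,y)} d_γ(z,e)`; this is that minimum. -/
def offDist {M : ℕ} (γ : Fin M → ℤ) (x y z : Fin M → Bool) : ℤ :=
  (hpSet x y).inf' (hpSet_nonempty x y) (fun e => hamDist γ z e)

/-!
The coordinatewise majority vote `m` of `x`, `y`, `z` is the vertex of `HP(x,y)` nearest to `z`, and
`2 d(z,m) = d(x,z) + d(z,y) - d(x,y)`. Hence twice the distance from `z` to the Hamming paths is the
defect in the triangle inequality through `z`. A contraction shrinks the first two terms of the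
defect and, on a distance preserving pair, keeps the third.
-/

section Median

variable {M : ℕ}

/-- The median (coordinatewise majority) of three vertices of the hypercube, used as the vertex of
`hpSet x y` nearest to `z`. As a bit takes two values, the majority is `z` where `x` and `y`
differ. -/
def hamMedian (x y z : Fin M → Bool) : Fin M → Bool :=
  fun i => if x i = y i then x i else z i

lemma mem_hpSet {x y e : Fin M → Bool} : e ∈ hpSet x y ↔ ∀ i, x i = y i → e i = x i := by
  simp only [hpSet, onHamPath, mem_filter_univ]

lemma hamMedian_mem_hpSet (x y z : Fin M → Bool) : hamMedian x y z ∈ hpSet x y :=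
  mem_hpSet.2 fun _ hxy => if_pos hxy

lemma two_mul_hamDist_hamMedian (γ : Fin M → ℤ) (x y z : Fin M → Bool) :
    2 * hamDist γ z (hamMedian x y z) = hamDist γ x z + hamDist γ z y - hamDist γ x y := by
  simp only [hamDist, hamMedian, mul_sum, ← sum_add_distrib, ← sum_sub_distrib]
  refine sum_congr rfl fun i _ => ?_
  by_cases hxy : x i = y i
  · simp [hxy, eq_comm (a := z i), two_mul, ite_add_ite]
  · obtain hz | hz : z i = x i ∨ z i = y i := by
      rw [Bool.eq_not.2 hxy, or_comm]
      exact Bool.eq_or_eq_not _ _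
    all_goals simp [hz, hxy]

lemma hamDist_hamMedian_le {γ : Fin M → ℤ} (hγ : ∀ i, 0 ≤ γ i) {x y e : Fin M → Bool}
    (he : e ∈ hpSet x y) (z : Fin M → Bool) :
    hamDist γ z (hamMedian x y z) ≤ hamDist γ z e := by
  refine sum_le_sum fun i _ => ?_
  by_cases hxy : x i = y i
  · simp only [hamMedian, if_pos hxy, mem_hpSet.1 he i hxy, le_refl]
  · simp only [hamMedian, if_neg hxy, if_true]
    split_ifs
    exacts [le_rfl, hγ i]

lemma offDist_le_hamDist_hamMedian (γ : Fin M → ℤ) (x y z : Fin M → Bool) :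
    offDist γ x y z ≤ hamDist γ z (hamMedian x y z) :=
  inf'_le _ (hamMedian_mem_hpSet x y z)

lemma hamDist_hamMedian_le_offDist {γ : Fin M → ℤ} (hγ : ∀ i, 0 ≤ γ i) (x y z : Fin M → Bool) :
    hamDist γ z (hamMedian x y z) ≤ offDist γ x y z :=
  le_inf' _ _ fun _ he => hamDist_hamMedian_le hγ he z

end Median

theorem stmt_9_general {M N : ℕ} {α : Fin M → ℤ} {β : Fin N → ℤ} (hα : ∀ i, 0 ≤ α i)
    {x y z : Fin M → Bool} {x' y' z' : Fin N → Bool}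
    (hxy : hamDist α x y ≤ hamDist β x' y')
    (hxz : hamDist β x' z' ≤ hamDist α x z)
    (hzy : hamDist β z' y' ≤ hamDist α z y) :
    offDist β x' y' z' ≤ offDist α x y z := by
  have median_le : hamDist β z' (hamMedian x' y' z') ≤ hamDist α z (hamMedian x y z) := by
    linarith [two_mul_hamDist_hamMedian α x y z, two_mul_hamDist_hamMedian β x' y' z']
  calc offDist β x' y' z'
    _ ≤ hamDist β z' (hamMedian x' y' z') := offDist_le_hamDist_hamMedian β x' y' z'
    _ ≤ hamDist α z (hamMedian x y z) := median_le
    _ ≤ offDist α x y z := hamDist_hamMedian_le_offDist hα x y z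

theorem stmt_9 {M N : ℕ} (α : Fin M → ℤ) (β : Fin N → ℤ)
    (hα : ∀ i, 1 ≤ α i) (hβ : ∀ r, 1 ≤ β r)
    (f : (Fin M → Bool) → (Fin N → Bool))
    (hf : ∀ x x', hamDist β (f x) (f x') ≤ hamDist α x x')
    (x y : Fin M → Bool)
    (hdp : hamDist α x y = hamDist β (f x) (f y))
    (z : Fin M → Bool) (k : ℤ) (hk : offDist α x y z = k) :
    offDist β (f x) (f y) (f z) ≤ k :=
  hk ▸ stmt_9_general (fun i => zero_le_one.trans (hα i)) hdp.le (hf x z) (hf z y)
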